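/- arXiv:2402.04932 — 4 statements merged into one kernel-verified Lean document; each statement's English description precedes it below -/
import Mathlib

section
/- Let X be a metric space equipped with a finite Borel measure μ, let n ≥ 1 be an integer, let Z be a finite nonempty subset of X, let ρ : X → ℝ be a function that is positive on Z, and let ε ≥ 0. Suppose that for every x ∈ X and all real numbers r₁, r₂ with 0 < r₁ < r₂ < ρ(x) we have #(Z ∩ B(x, r₁)) · (r₂ − r₁)^n ≤ n! · (μ(B(x, r₂)) + ε). Let ρ₀ = min over z ∈ Z of ρ(z), and assume 4^n · n! · ε < ρ₀^n. Then #Z ≤ [(μ(X) + ε) · n! · 2^n / ρ₀^n] · [μ(X) · n! · 4^n / (ρ₀^n − 4^n · n! · ε)]. -/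
open MeasureTheory Metric

/-!
Choose a maximal `ρ₀ / 2`-separated set `S ⊆ Z`. The balls of radius `ρ₀ / 4` around points of `S`
are disjoint and those of radius `ρ₀ / 2` cover `Z`. The packing hypothesis at `z ∈ S` is used twice,
each time in a limit:
* `r₁ → 0`, `r₂ = ρ₀ / 4` gives `(ρ₀ / 4) ^ n ≤ n! (μ (ball z (ρ₀ / 4)) + ε)`, since the small ball
  contains `z`; summing over the disjoint balls bounds `#S`;
* `r₁ = ρ₀ / 2`, `r₂ → ρ₀` bounds the number of points of `Z` in each half-radius ball.
The product of the two bounds is the claim.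
-/

/-- A finite set contains a `d`-separated subset whose open `d`-balls cover it. -/
lemma exists_separated_cover {X : Type*} [MetricSpace X] {d : ℝ} (hd : 0 < d) (Z : Finset X) :
    ∃ S ⊆ Z, (∀ x ∈ S, ∀ y ∈ S, x ≠ y → d ≤ dist x y) ∧ ∀ z ∈ Z, ∃ s ∈ S, z ∈ ball s d := by
  classical
  induction Z using Finset.induction_on with
  | empty => exact ⟨∅, by simp⟩
  | insert a Z ha ih =>
    obtain ⟨S, hSZ, hsep, hcov⟩ := ih
    by_cases h : ∃ s ∈ S, a ∈ ball s d
    · refine ⟨S, hSZ.trans (Finset.subset_insert _ _), hsep, fun z hz => ?_⟩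
      rcases Finset.mem_insert.1 hz with rfl | hz
      · exact h
      · exact hcov z hz
    · simp only [mem_ball, not_exists, not_and, not_lt] at h
      refine ⟨insert a S, Finset.insert_subset_insert _ hSZ, fun x hx y hy hxy => ?_,
        fun z hz => ?_⟩
      · rcases Finset.mem_insert.1 hx with rfl | hx'
        · rcases Finset.mem_insert.1 hy with rfl | hy'
          · exact absurd rfl hxy
          · exact h y hy'
        · rcases Finset.mem_insert.1 hy with rfl | hy'
          · rw [dist_comm]; exact h x hx'
          · exact hsep x hx' y hy' hxy
      · rcases Finset.mem_insert.1 hz with rfl | hz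
        · exact ⟨z, Finset.mem_insert_self _ _, mem_ball_self hd⟩
        · obtain ⟨s, hs, hzs⟩ := hcov z hz
          exact ⟨s, Finset.mem_insert_of_mem hs, hzs⟩

/-- Passage to the limit `t → b⁻` in a bound on `c * (t - a) ^ n`. -/
lemma mul_pow_sub_le_of_forall_lt {a b c C : ℝ} (n : ℕ) (hab : a < b)
    (h : ∀ t, a < t → t < b → c * (t - a) ^ n ≤ C) : c * (b - a) ^ n ≤ C := by
  have hcont : Continuous fun t : ℝ => c * (t - a) ^ n := by fun_prop
  refine le_of_tendsto (hcont.continuousWithinAt (s := Set.Iio b) (x := b)) ?_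
  filter_upwards [Ioo_mem_nhdsLT hab] with t ht
  exact h t ht.1 ht.2

/-- Quantitative counting estimate with error parameter `ε`: if every ball satisfies the
packing-type inequality `#(Z ∩ B(x, r₁)) · (r₂ − r₁)^n ≤ n! · (μ(B(x, r₂)) + ε)` for
`0 < r₁ < r₂ < ρ(x)`, and `ρ₀` is the minimum of `ρ` over `Z`, with
`4^n · n! · ε < ρ₀^n`, then
`#Z ≤ [(μ(X) + ε) · n! · 2^n / ρ₀^n] · [μ(X) · n! · 4^n / (ρ₀^n − 4^n · n! · ε)]`. -/
theorem counting_estimate_with_error {X : Type*} [MetricSpace X] [MeasurableSpace X]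
    [BorelSpace X] (μ : Measure X) [IsFiniteMeasure μ]
    (n : ℕ) (hn : 1 ≤ n) (Z : Finset X) (hZ : Z.Nonempty)
    (ρ : X → ℝ) (hρ : ∀ z ∈ Z, 0 < ρ z) (ε : ℝ) (hε : 0 ≤ ε)
    (hpack : ∀ x : X, ∀ r₁ r₂ : ℝ, 0 < r₁ → r₁ < r₂ → r₂ < ρ x →
      ((↑Z ∩ ball x r₁ : Set X).ncard : ℝ) * (r₂ - r₁) ^ n ≤
        (n.factorial : ℝ) * ((μ (ball x r₂)).toReal + ε))
    (ρ₀ : ℝ) (hρ₀le : ∀ z ∈ Z, ρ₀ ≤ ρ z) (hρ₀mem : ∃ z ∈ Z, ρ z = ρ₀)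
    (hεsmall : 4 ^ n * (n.factorial : ℝ) * ε < ρ₀ ^ n) :
    (Z.card : ℝ) ≤
      ((μ Set.univ).toReal + ε) * (n.factorial : ℝ) * 2 ^ n / ρ₀ ^ n *
        ((μ Set.univ).toReal * (n.factorial : ℝ) * 4 ^ n /
          (ρ₀ ^ n - 4 ^ n * (n.factorial : ℝ) * ε)) := by
  classical
  obtain ⟨z₀, hz₀, hz₀ρ⟩ := hρ₀mem
  have hpos : 0 < ρ₀ := hz₀ρ ▸ hρ z₀ hz₀
  have hfac : (0 : ℝ) < n.factorial := by exact_mod_cast n.factorial_pos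
  obtain ⟨S, hSZ, hsep, hcov⟩ := exists_separated_cover (half_pos hpos) Z
  set M : ℝ := (μ Set.univ).toReal with hM
  have hmono : ∀ A : Set X, (μ A).toReal ≤ M := fun A =>
    ENNReal.toReal_mono (measure_ne_top μ _) (measure_mono (Set.subset_univ A))
  have hM0 : 0 ≤ M := ENNReal.toReal_nonneg
  have hlow : ∀ z ∈ S, (ρ₀ / 4) ^ n ≤ n.factorial * ((μ (ball z (ρ₀ / 4))).toReal + ε) := by
    intro z hz
    have key := mul_pow_sub_le_of_forall_lt (a := 0) (b := ρ₀ / 4) (c := 1)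
      (C := n.factorial * ((μ (ball z (ρ₀ / 4))).toReal + ε)) n (by positivity) ?_
    · simpa using key
    intro t ht0 ht
    -- `t` is the gap `r₂ - r₁`, with `r₂ = ρ₀ / 4`.
    have hp := hpack z (ρ₀ / 4 - t) (ρ₀ / 4) (by linarith) (by linarith)
      (by linarith [hρ₀le z (hSZ hz)])
    rw [sub_sub_cancel] at hp
    have hone : (1 : ℝ) ≤ ((↑Z ∩ ball z (ρ₀ / 4 - t) : Set X).ncard : ℝ) := by
      have : 0 < (↑Z ∩ ball z (ρ₀ / 4 - t) : Set X).ncard :=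
        (Set.ncard_pos (Z.finite_toSet.inter_of_left _)).2
          ⟨z, hSZ hz, mem_ball_self (by linarith)⟩
      exact_mod_cast this
    rw [sub_zero]
    exact (mul_le_mul_of_nonneg_right hone (by positivity)).trans hp
  have hhalf : ∀ z ∈ S, ((↑Z ∩ ball z (ρ₀ / 2) : Set X).ncard : ℝ) ≤
      (M + ε) * n.factorial * 2 ^ n / ρ₀ ^ n := by
    intro z hz
    have key := mul_pow_sub_le_of_forall_lt (a := ρ₀ / 2) (b := ρ₀)
      (c := ((↑Z ∩ ball z (ρ₀ / 2) : Set X).ncard : ℝ)) (C := n.factorial * (M + ε)) n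
      (by linarith) (fun t h1 h2 => by
        refine (hpack z _ t (by positivity) h1 (by linarith [hρ₀le z (hSZ hz)])).trans ?_
        gcongr
        exact hmono _)
    rw [sub_half, div_pow, ← mul_div_assoc, div_le_iff₀ (by positivity)] at key
    rw [le_div_iff₀ (by positivity)]
    linarith
  have hsum : ∑ z ∈ S, (μ (ball z (ρ₀ / 4))).toReal ≤ M := by
    have hdisj : (S : Set X).PairwiseDisjoint fun z => ball z (ρ₀ / 4) := by
      intro x hx y hy hxy
      exact ball_disjoint_ball (by linarith [hsep x hx y hy hxy])
    have := measureReal_biUnion_finset (μ := μ) hdisj (fun z _ => measurableSet_ball)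
    simp only [measureReal_def] at this
    rw [← this]
    exact hmono _
  have hScard : (S.card : ℝ) ≤
      M * n.factorial * 4 ^ n / (ρ₀ ^ n - 4 ^ n * n.factorial * ε) := by
    rw [le_div_iff₀ (by linarith)]
    have h1 : ∀ z ∈ S, ρ₀ ^ n - 4 ^ n * n.factorial * ε ≤
        n.factorial * 4 ^ n * (μ (ball z (ρ₀ / 4))).toReal := by
      intro z hz
      have := hlow z hz
      rw [div_pow, div_le_iff₀ (by positivity)] at this
      linarith
    have h2 := Finset.sum_le_sum h1
    rw [Finset.sum_const, nsmul_eq_mul, ← Finset.mul_sum] at h2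
    have h3 := mul_le_mul_of_nonneg_left hsum (by positivity : (0 : ℝ) ≤ n.factorial * 4 ^ n)
    linarith
  have hZcard : (Z.card : ℝ) ≤ ∑ z ∈ S, ((↑Z ∩ ball z (ρ₀ / 2) : Set X).ncard : ℝ) := by
    have hsub : Z ⊆ S.biUnion fun s => Z.filter (· ∈ ball s (ρ₀ / 2)) := by
      intro z hz
      obtain ⟨s, hs, hzs⟩ := hcov z hz
      exact Finset.mem_biUnion.2 ⟨s, hs, Finset.mem_filter.2 ⟨hz, hzs⟩⟩
    have heq : ∀ s, (Z.filter (· ∈ ball s (ρ₀ / 2))).card =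
        (↑Z ∩ ball s (ρ₀ / 2) : Set X).ncard := by
      intro s
      rw [← Set.ncard_coe_finset]
      congr 1
      ext x
      simp
    have := (Finset.card_le_card hsub).trans Finset.card_biUnion_le
    simp only [heq] at this
    exact_mod_cast this
  calc (Z.card : ℝ) ≤ _ := hZcard
    _ ≤ ∑ _z ∈ S, (M + ε) * n.factorial * 2 ^ n / ρ₀ ^ n := Finset.sum_le_sum hhalf
    _ = (M + ε) * n.factorial * 2 ^ n / ρ₀ ^ n * S.card := by
      rw [Finset.sum_const, nsmul_eq_mul, mul_comm]
    _ ≤ _ := mul_le_mul_of_nonneg_left hScard (by positivity)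
end

section
/- Let X be a metric space equipped with a finite Borel measure μ, let n ≥ 1 be an integer, let Z be a finite nonempty subset of X, and let ρ : X → ℝ be a function that is positive on Z. Suppose that for every x ∈ X and all real numbers r₁, r₂ with 0 < r₁ < r₂ < ρ(x) we have #(Z ∩ B(x, r₁)) · (r₂ − r₁)^n ≤ n! · μ(B(x, r₂)). Let ρ₀ = min over z ∈ Z of ρ(z). Then #Z ≤ 8^n · (n!)² · μ(X)² / ρ₀^{2n}. -/
/-!
Choose `S ⊆ Z` maximal among the `ρ₀/2`-separated subsets. The balls `B(s, ρ₀/4)`, `s ∈ S`, are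
disjoint, and the packing hypothesis with `r₂ = ρ₀/4`, `r₁ → 0` gives each of them measure at
least `(ρ₀/4)^n / n!`; hence `#S · (ρ₀/4)^n ≤ n! μ(X)`. By maximality the balls `B(s, ρ₀/2)` cover
`Z`, and the packing hypothesis with `r₁ = ρ₀/2`, `r₂ → ρ₀` shows that each contains at most
`n! μ(X) / (ρ₀/2)^n` points of `Z`. Multiplying the two bounds gives the claim, since
`1/4 · 1/2 = 1/8`.
-/


open MeasureTheory Metric

/-- A finite set has a `d`-separated subset whose open `d`-balls cover it. -/
lemma exists_separated_net {X : Type*} [MetricSpace X] (Z : Finset X) {d : ℝ} (hd : 0 < d) :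
    ∃ S ⊆ Z, (∀ x ∈ S, ∀ y ∈ S, x ≠ y → d ≤ dist x y) ∧ ∀ z ∈ Z, ∃ s ∈ S, dist z s < d := by
  classical
  obtain ⟨S, hS, hmax⟩ := Finset.exists_max_image
    (Z.powerset.filter fun S => ∀ x ∈ S, ∀ y ∈ S, x ≠ y → d ≤ dist x y) Finset.card
    ⟨∅, by simp⟩
  rw [Finset.mem_filter, Finset.mem_powerset] at hS
  refine ⟨S, hS.1, hS.2, fun z hz => ?_⟩
  by_contra! hcon
  have hzS : z ∉ S := fun h => by
    have := hcon z h
    rw [dist_self] at this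
    linarith
  -- Otherwise `insert z S` would be a larger separated subset.
  have := hmax (insert z S) (by
    rw [Finset.mem_filter, Finset.mem_powerset]
    refine ⟨Finset.insert_subset hz hS.1, fun x hx y hy hxy => ?_⟩
    rw [Finset.mem_insert] at hx hy
    rcases hx with rfl | hx <;> rcases hy with rfl | hy
    · exact absurd rfl hxy
    · exact hcon y hy
    · rw [dist_comm]
      exact hcon x hx
    · exact hS.2 x hx y hy hxy)
  rw [Finset.card_insert_of_notMem hzS] at this
  omega

/-- Counting estimate (ε = 0 form): if every ball satisfies the packing-type inequality
`#(Z ∩ B(x, r₁)) · (r₂ − r₁)^n ≤ n! · μ(B(x, r₂))` for `0 < r₁ < r₂ < ρ(x)`, and `ρ₀`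
is the minimum of `ρ` over `Z`, then `#Z ≤ 8^n · (n!)² · μ(X)² / ρ₀^{2n}`. -/
theorem counting_estimate {X : Type*} [MetricSpace X] [MeasurableSpace X]
    [BorelSpace X] (μ : Measure X) [IsFiniteMeasure μ]
    (n : ℕ) (hn : 1 ≤ n) (Z : Finset X) (hZ : Z.Nonempty)
    (ρ : X → ℝ) (hρ : ∀ z ∈ Z, 0 < ρ z)
    (hpack : ∀ x : X, ∀ r₁ r₂ : ℝ, 0 < r₁ → r₁ < r₂ → r₂ < ρ x →
      ((↑Z ∩ ball x r₁ : Set X).ncard : ℝ) * (r₂ - r₁) ^ n ≤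
        (n.factorial : ℝ) * (μ (ball x r₂)).toReal)
    (ρ₀ : ℝ) (hρ₀le : ∀ z ∈ Z, ρ₀ ≤ ρ z) (hρ₀mem : ∃ z ∈ Z, ρ z = ρ₀) :
    (Z.card : ℝ) ≤
      8 ^ n * (n.factorial : ℝ) ^ 2 * (μ Set.univ).toReal ^ 2 / ρ₀ ^ (2 * n) := by
  classical
  have hρ₀ : 0 < ρ₀ := by
    obtain ⟨z, hz, rfl⟩ := hρ₀mem
    exact hρ z hz
  obtain ⟨S, hSZ, hsep, hcov⟩ := exists_separated_net Z (half_pos hρ₀)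
  set V : ℝ := (n.factorial : ℝ) * (μ Set.univ).toReal with hV
  have hV0 : 0 ≤ V := by positivity
  have hsmall : ∀ s ∈ S, (ρ₀ / 4) ^ n ≤ (n.factorial : ℝ) * μ.real (ball s (ρ₀ / 4)) := by
    intro s hs
    have hlim : Filter.Tendsto (fun r : ℝ => (ρ₀ / 4 - r) ^ n) (nhdsWithin 0 (Set.Ioi 0))
        (nhds ((ρ₀ / 4) ^ n)) := by
      have : Continuous fun r : ℝ => (ρ₀ / 4 - r) ^ n := by fun_prop
      simpa using (this.tendsto 0).mono_left nhdsWithin_le_nhds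
    refine le_of_tendsto hlim ?_
    filter_upwards [Ioo_mem_nhdsGT (show (0 : ℝ) < ρ₀ / 4 by positivity)] with r hr
    have h := hpack s r (ρ₀ / 4) hr.1 hr.2 (by linarith [hρ₀le s (hSZ hs)])
    have hcard : (1 : ℝ) ≤ ((↑Z ∩ ball s r : Set X).ncard : ℝ) := by
      have : 0 < (↑Z ∩ ball s r : Set X).ncard :=
        (Set.ncard_pos (Z.finite_toSet.inter_of_left _)).2
          ⟨s, Finset.mem_coe.2 (hSZ hs), mem_ball_self hr.1⟩
      exact_mod_cast this
    have hpos : 0 ≤ (ρ₀ / 4 - r) ^ n := pow_nonneg (by linarith [hr.2]) n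
    exact (le_mul_of_one_le_left hpos hcard).trans h
  have hScard : (S.card : ℝ) * (ρ₀ / 4) ^ n ≤ V := by
    have hdisj : (S : Set X).PairwiseDisjoint fun s => ball s (ρ₀ / 4) := by
      intro x hx y hy hxy
      refine ball_disjoint_ball ?_
      linarith [hsep x hx y hy hxy]
    calc (S.card : ℝ) * (ρ₀ / 4) ^ n = ∑ s ∈ S, (ρ₀ / 4) ^ n := by simp
      _ ≤ ∑ s ∈ S, (n.factorial : ℝ) * μ.real (ball s (ρ₀ / 4)) := Finset.sum_le_sum hsmall
      _ = (n.factorial : ℝ) * μ.real (⋃ s ∈ S, ball s (ρ₀ / 4)) := by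
        rw [measureReal_biUnion_finset hdisj fun s _ => measurableSet_ball, Finset.mul_sum]
      _ ≤ V := mul_le_mul_of_nonneg_left (measureReal_mono (Set.subset_univ _)) (by positivity)
  have hlarge : ∀ s ∈ S, ((Z.filter fun z => dist z s < ρ₀ / 2).card : ℝ) * (ρ₀ / 2) ^ n ≤ V := by
    intro s hs
    have hset : ((Z.filter fun z => dist z s < ρ₀ / 2 : Finset X) : Set X)
        = ↑Z ∩ ball s (ρ₀ / 2) := by
      ext z
      simp
    rw [← Set.ncard_coe_finset, hset]
    have hlim : Filter.Tendsto
        (fun r : ℝ => ((↑Z ∩ ball s (ρ₀ / 2) : Set X).ncard : ℝ) * (r - ρ₀ / 2) ^ n)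
        (nhdsWithin ρ₀ (Set.Iio ρ₀))
        (nhds (((↑Z ∩ ball s (ρ₀ / 2) : Set X).ncard : ℝ) * (ρ₀ / 2) ^ n)) := by
      have : Continuous
          fun r : ℝ => ((↑Z ∩ ball s (ρ₀ / 2) : Set X).ncard : ℝ) * (r - ρ₀ / 2) ^ n := by
        fun_prop
      simpa only [sub_half] using (this.tendsto ρ₀).mono_left nhdsWithin_le_nhds
    refine le_of_tendsto hlim ?_
    filter_upwards [Ioo_mem_nhdsLT (half_lt_self hρ₀)] with r hr
    refine (hpack s (ρ₀ / 2) r (half_pos hρ₀) hr.1 (hr.2.trans_le (hρ₀le s (hSZ hs)))).trans ?_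
    exact mul_le_mul_of_nonneg_left (measureReal_mono (Set.subset_univ _)) (by positivity)
  have hZcard : (Z.card : ℝ) * (ρ₀ / 2) ^ n ≤ S.card * V := by
    have hsub : Z ⊆ S.biUnion fun s => Z.filter fun z => dist z s < ρ₀ / 2 := by
      intro z hz
      obtain ⟨s, hs, hzs⟩ := hcov z hz
      exact Finset.mem_biUnion.2 ⟨s, hs, Finset.mem_filter.2 ⟨hz, hzs⟩⟩
    have hle : (Z.card : ℝ) ≤ ∑ s ∈ S, ((Z.filter fun z => dist z s < ρ₀ / 2).card : ℝ) := by
      exact_mod_cast (Finset.card_le_card hsub).trans Finset.card_biUnion_le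
    calc (Z.card : ℝ) * (ρ₀ / 2) ^ n
        ≤ (∑ s ∈ S, ((Z.filter fun z => dist z s < ρ₀ / 2).card : ℝ)) * (ρ₀ / 2) ^ n := by gcongr
      _ = ∑ s ∈ S, ((Z.filter fun z => dist z s < ρ₀ / 2).card : ℝ) * (ρ₀ / 2) ^ n :=
        Finset.sum_mul ..
      _ ≤ ∑ s ∈ S, V := Finset.sum_le_sum hlarge
      _ = S.card * V := by simp
  have hpow : ρ₀ ^ (2 * n) = 8 ^ n * ((ρ₀ / 2) ^ n * (ρ₀ / 4) ^ n) := by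
    rw [pow_mul, ← mul_pow, ← mul_pow]
    congr 1
    ring
  rw [le_div_iff₀ (by positivity), hpow]
  calc (Z.card : ℝ) * (8 ^ n * ((ρ₀ / 2) ^ n * (ρ₀ / 4) ^ n))
      = 8 ^ n * ((Z.card * (ρ₀ / 2) ^ n) * (ρ₀ / 4) ^ n) := by ring
    _ ≤ 8 ^ n * ((S.card * V) * (ρ₀ / 4) ^ n) := by gcongr
    _ = 8 ^ n * ((S.card * (ρ₀ / 4) ^ n) * V) := by ring
    _ ≤ 8 ^ n * (V * V) := by gcongr
    _ = 8 ^ n * (n.factorial : ℝ) ^ 2 * (μ Set.univ).toReal ^ 2 := by rw [hV]; ring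
end

section
/- Let X be a metric space equipped with a Borel measure μ, and let a group G act on X by measure-preserving isometries (that is, d(g·y, g·z) = d(y, z) for all g ∈ G and y, z ∈ X, and μ(g·A) = μ(A) for every g ∈ G and every measurable set A). Let H be a subgroup of G, let x ∈ X, and let δ > 0 be such that d(x, g·x) ≥ 2δ for every element g ∈ H other than the identity. Then for every real number R ≥ δ, we have μ(B(x, R)) ≥ #{g ∈ H : d(x, g·x) ≤ R − δ} · μ(B(x, δ)). -/
/-!
The balls `B(g • x, δ)`, for `g ∈ H` with `d(x, g • x) ≤ R - δ`, are translates of `B(x, δ)`, hence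
have its measure. They are pairwise disjoint, since for `g ≠ h` in `H` the distance between the
centres is `d(x, g⁻¹h • x) ≥ 2δ`, and they lie in `B(x, R)` by the triangle inequality.
-/

open MeasureTheory Metric Pointwise ENNReal

/-- Orbit-counting lemma: if a group `G` acts on `X` by measure-preserving isometries,
`H` is a subgroup whose nontrivial elements move `x` a distance at least `2δ`, then for
every `R ≥ δ` the ball `B(x, R)` has measure at least the number of elements `g ∈ H`
with `d(x, g·x) ≤ R − δ` times the measure of `B(x, δ)`. -/
theorem orbit_counting_ball_measure {X : Type*} [MetricSpace X] [MeasurableSpace X]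
    [BorelSpace X] (μ : Measure X)
    {G : Type*} [Group G] [MulAction G X]
    (hiso : ∀ (g : G) (y z : X), dist (g • y) (g • z) = dist y z)
    (hmeas : ∀ (g : G) (A : Set X), MeasurableSet A → μ (g • A) = μ A)
    (H : Subgroup G) (x : X) (δ : ℝ) (hδ : 0 < δ)
    (hsep : ∀ g ∈ H, g ≠ 1 → 2 * δ ≤ dist x (g • x)) :
    ∀ R : ℝ, δ ≤ R →
      ({g : G | g ∈ H ∧ dist x (g • x) ≤ R - δ}.encard : ℝ≥0∞) * μ (ball x δ) ≤
        μ (ball x R) := by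
  intro R hR
  set S : Set G := {g : G | g ∈ H ∧ dist x (g • x) ≤ R - δ} with hS
  have hball (g : G) : g • ball x δ = ball (g • x) δ := by
    ext y
    rw [Set.mem_smul_set_iff_inv_smul_mem, mem_ball, mem_ball, ← hiso g, smul_inv_smul]
  have hdisj : Pairwise (Function.onFun Disjoint fun g : S => ball ((g : G) • x) δ) := by
    intro g h hgh
    refine ball_disjoint_ball ?_
    have hne : (g : G)⁻¹ * h ≠ 1 := fun e => hgh (Subtype.ext (inv_mul_eq_one.mp e))
    have hle := hsep _ (H.mul_mem (H.inv_mem g.2.1) h.2.1) hne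
    rw [← hiso g, mul_smul, smul_inv_smul] at hle
    linarith
  calc (S.encard : ℝ≥0∞) * μ (ball x δ)
      = ∑' g : S, μ (ball ((g : G) • x) δ) := by
        simp only [← hball, hmeas _ _ measurableSet_ball, ENNReal.tsum_const, Set.encard]
    _ ≤ μ (⋃ g : S, ball ((g : G) • x) δ) :=
        -- `S` may be uncountable: this inequality holds for arbitrary disjoint measurable families.
        tsum_meas_le_meas_iUnion_of_disjoint μ (fun _ => measurableSet_ball) hdisj
    _ ≤ μ (ball x R) := by
        refine measure_mono (Set.iUnion_subset fun g => ball_subset_ball' ?_)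
        have := g.2.2
        rw [dist_comm] at this
        linarith
end

section
/- Let X be a metric space equipped with a Borel measure μ, and let a group G act on X by measure-preserving isometries (that is, d(g·y, g·z) = d(y, z) for all g ∈ G and y, z ∈ X, and μ(g·A) = μ(A) for every g ∈ G and every measurable set A). Let a, b ∈ G freely generate a free subgroup of rank 2 (that is, the homomorphism from the free group on two generators sending the generators to a and b is injective). Let x ∈ X and let ℓ, δ > 0 be such that d(x, a·x) ≤ ℓ, d(x, b·x) ≤ ℓ, and d(x, g·x) ≥ 2δ for every element g ≠ 1 of the subgroup generated by a and b. Then for every natural number k, we have μ(B(x, k·ℓ + δ)) ≥ (2 · 3^k − 1) · μ(B(x, δ)). -/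
/-!
The reduced words of length at most `k` in `a, b, a⁻¹, b⁻¹` represent `2 * 3 ^ k - 1` distinct
elements `g` of `⟨a, b⟩`. Each moves `x` by at most `k * ℓ` (`dist_smul_word_le`), so the ball
`g • ball x δ = ball (g • x) δ` lies in `ball x (k * ℓ + δ)`. Two such balls are disjoint,
because their centers are at distance at least `2 * δ`, and all of them have measure
`μ (ball x δ)`; adding up the measures gives the estimate.

The words are counted by splitting off the first letter (`exists_reduced_words_after`): after a
given letter exactly three letters may follow, so the number `N k` of admissible continuations of
length at most `k` satisfies `N 0 = 1` and `N (k + 1) = 1 + 3 * N k`, whence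
`2 * N k + 1 = 3 ^ (k + 1)`. There are four possible first letters, so the number of reduced words
of length at most `k + 1` is `1 + 4 * N k = 2 * 3 ^ (k + 1) - 1`.
-/

open MeasureTheory Metric ENNReal Pointwise

/-- The finset consisting of the empty word and the words `q :: w` with `q ∈ Q` and `w ∈ f q`. -/
def consWords (Q : Finset (Fin 2 × Bool)) (f : Fin 2 × Bool → Finset (List (Fin 2 × Bool))) :
    Finset (List (Fin 2 × Bool)) :=
  insert [] (Q.biUnion fun q => (f q).image (List.cons q))

theorem mem_consWords {Q : Finset (Fin 2 × Bool)}
    {f : Fin 2 × Bool → Finset (List (Fin 2 × Bool))} {w : List (Fin 2 × Bool)} :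
    w ∈ consWords Q f ↔ w = [] ∨ ∃ q ∈ Q, ∃ v ∈ f q, q :: v = w := by
  simp [consWords]

theorem card_consWords (Q : Finset (Fin 2 × Bool))
    (f : Fin 2 × Bool → Finset (List (Fin 2 × Bool))) :
    (consWords Q f).card = ∑ q ∈ Q, (f q).card + 1 := by
  rw [consWords, Finset.card_insert_of_notMem (by simp), Finset.card_biUnion]
  · congr 1
    exact Finset.sum_congr rfl fun q _ => Finset.card_image_of_injective _ List.cons_injective
  · intro q _ r _ hqr
    rw [Function.onFun, Finset.disjoint_left]
    intro w hw hw'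
    obtain ⟨u, _, rfl⟩ := Finset.mem_image.1 hw
    obtain ⟨v, _, h⟩ := Finset.mem_image.1 hw'
    exact hqr (List.cons.inj h).1.symm

/-- At least `(3 ^ (k + 1) - 1) / 2` words of length at most `k` can follow the letter `p`
in a reduced word. -/
theorem exists_reduced_words_after (k : ℕ) : ∀ p : Fin 2 × Bool,
    ∃ S : Finset (List (Fin 2 × Bool)), 2 * S.card + 1 = 3 ^ (k + 1) ∧
      ∀ w ∈ S, FreeGroup.IsReduced (p :: w) ∧ w.length ≤ k := by
  induction k with
  | zero => exact fun p => ⟨{[]}, by simp, by simp⟩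
  | succ k ih =>
    intro p
    choose f hcard hf using ih
    refine ⟨consWords (Finset.univ.erase (p.1, !p.2)) f, ?_, ?_⟩
    · have hc : ∀ q, (f q).card = (f p).card := fun q => by
        have := hcard q
        have := hcard p
        omega
      have := hcard p
      rw [card_consWords, Finset.sum_congr rfl fun q _ => hc q, Finset.sum_const,
        Finset.card_erase_of_mem (Finset.mem_univ _), pow_succ]
      simp
      omega
    · intro w hw
      obtain rfl | ⟨q, hq, v, hv, rfl⟩ := mem_consWords.1 hw
      · simp
      · refine ⟨FreeGroup.isReduced_cons_cons.2 ⟨fun h => ?_, (hf q v hv).1⟩, ?_⟩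
        · by_contra h2
          refine (Finset.mem_erase.1 hq).1 (Prod.ext h.symm ?_)
          cases hp : p.2 <;> cases hq' : q.2 <;> simp_all
        · simpa using (hf q v hv).2

theorem exists_reduced_words (k : ℕ) :
    ∃ S : Finset (List (Fin 2 × Bool)), S.card = 2 * 3 ^ k - 1 ∧
      ∀ w ∈ S, FreeGroup.IsReduced w ∧ w.length ≤ k := by
  cases k with
  | zero => exact ⟨{[]}, by simp, by simp⟩
  | succ k =>
    choose f hcard hf using exists_reduced_words_after k
    refine ⟨consWords Finset.univ f, ?_, ?_⟩
    · have hc : ∀ q, (f q).card = (f (0, true)).card := fun q => by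
        have := hcard q
        have := hcard (0, true)
        omega
      have := hcard (0, true)
      rw [card_consWords, Finset.sum_congr rfl fun q _ => hc q, Finset.sum_const]
      simp
      omega
    · intro w hw
      obtain rfl | ⟨q, -, v, hv, rfl⟩ := mem_consWords.1 hw
      · simp
      · exact ⟨(hf q v hv).1, by simpa using (hf q v hv).2⟩

theorem dist_smul_word_le {X G : Type*} [MetricSpace X] [Group G] [MulAction G X]
    (hiso : ∀ (g : G) (y z : X), dist (g • y) (g • z) = dist y z)
    (s : Fin 2 → G) (x : X) (ℓ : ℝ) (hs : ∀ i, dist x (s i • x) ≤ ℓ)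
    (w : List (Fin 2 × Bool)) :
    dist x (FreeGroup.lift s (FreeGroup.mk w) • x) ≤ w.length * ℓ := by
  induction w with
  | nil => simp [FreeGroup.lift_mk]
  | cons p w ih =>
    obtain ⟨i, e⟩ := p
    have hstep : ∀ g : G, dist x (g • x) ≤ ℓ → ∀ h : G, dist x (h • x) ≤ w.length * ℓ →
        dist x ((g * h) • x) ≤ (w.length + 1 : ℝ) * ℓ := by
      intro g hg h hh
      have h1 := dist_triangle x (g • x) ((g * h) • x)
      rw [mul_smul, hiso] at h1
      rw [mul_smul]
      linarith
    have hinv : dist x ((s i)⁻¹ • x) ≤ ℓ := by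
      rw [← hiso (s i), smul_inv_smul, dist_comm]
      exact hs i
    rw [FreeGroup.lift_mk] at ih ⊢
    cases e
    · simpa using hstep _ hinv _ ih
    · simpa using hstep _ (hs i) _ ih

/-- Exponential ball-growth estimate: if `a, b` freely generate a free subgroup of rank 2
of a group acting on `X` by measure-preserving isometries, both move `x` a distance at
most `ℓ`, and every nontrivial element of `⟨a, b⟩` moves `x` a distance at least `2δ`,
then `μ(B(x, kℓ + δ)) ≥ (2·3^k − 1) · μ(B(x, δ))` for every natural number `k`. -/
theorem free_subgroup_ball_growth {X : Type*} [MetricSpace X] [MeasurableSpace X]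
    [BorelSpace X] (μ : Measure X)
    {G : Type*} [Group G] [MulAction G X]
    (hiso : ∀ (g : G) (y z : X), dist (g • y) (g • z) = dist y z)
    (hmeas : ∀ (g : G) (A : Set X), MeasurableSet A → μ (g • A) = μ A)
    (a b : G) (hfree : Function.Injective (FreeGroup.lift ![a, b] : FreeGroup (Fin 2) →* G))
    (x : X) (ℓ δ : ℝ) (hℓ : 0 < ℓ) (hδ : 0 < δ)
    (ha : dist x (a • x) ≤ ℓ) (hb : dist x (b • x) ≤ ℓ)
    (hsep : ∀ g ∈ Subgroup.closure {a, b}, g ≠ 1 → 2 * δ ≤ dist x (g • x)) :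
    ∀ k : ℕ, ((2 * 3 ^ k - 1 : ℕ) : ℝ≥0∞) * μ (ball x δ) ≤
      μ (ball x (k * ℓ + δ)) := by
  intro k
  have : IsIsometricSMul G X := ⟨fun g => Isometry.of_dist_eq (hiso g)⟩
  obtain ⟨S, hcard, hS⟩ := exists_reduced_words k
  set φ : FreeGroup (Fin 2) →* G := FreeGroup.lift ![a, b] with hφ
  let γ : List (Fin 2 × Bool) → G := fun w => φ (FreeGroup.mk w)
  have hs : ∀ i, dist x (![a, b] i • x) ≤ ℓ := by
    intro i
    fin_cases i
    · exact ha
    · exact hb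
  have hmem : ∀ u, φ u ∈ Subgroup.closure {a, b} := by
    intro u
    have hu : φ u ∈ φ.range := ⟨u, rfl⟩
    rw [hφ, FreeGroup.range_lift_eq_closure] at hu
    simpa [Matrix.range_cons, Set.pair_comm] using hu
  have hdisj : (S : Set (List (Fin 2 × Bool))).PairwiseDisjoint fun w => ball (γ w • x) δ := by
    intro u hu v hv huv
    apply ball_disjoint_ball
    have hne : γ u ≠ γ v := by
      intro h
      have h2 := FreeGroup.reduce.sound (hfree h)
      rw [(hS u hu).1.reduce_eq, (hS v hv).1.reduce_eq] at h2
      exact huv h2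
    have h3 := hsep ((γ u)⁻¹ * γ v)
      (mul_mem (inv_mem (hmem _)) (hmem _)) (by rwa [Ne, inv_mul_eq_one])
    rw [← hiso (γ u), mul_smul, smul_inv_smul] at h3
    linarith
  have hball : ∀ w, μ (ball (γ w • x) δ) = μ (ball x δ) := by
    intro w
    rw [← Metric.smul_ball, hmeas _ _ measurableSet_ball]
  calc ((2 * 3 ^ k - 1 : ℕ) : ℝ≥0∞) * μ (ball x δ)
      = ∑ w ∈ S, μ (ball (γ w • x) δ) := by simp [hball, hcard]
    _ = μ (⋃ w ∈ S, ball (γ w • x) δ) :=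
        (measure_biUnion_finset hdisj fun _ _ => measurableSet_ball).symm
    _ ≤ μ (ball x (k * ℓ + δ)) := by
        refine measure_mono (Set.iUnion₂_subset fun w hw => ball_subset_ball' ?_)
        have h1 := dist_smul_word_le hiso ![a, b] x ℓ hs w
        have h2 : (w.length : ℝ) * ℓ ≤ k * ℓ := by
          have : (w.length : ℝ) ≤ k := by exact_mod_cast (hS w hw).2
          gcongr
        rw [dist_comm]
        change dist x (γ w • x) ≤ _ at h1
        linarith
end
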